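/- arXiv:2111.09949 — 2 statements merged into one kernel-verified Lean document; each statement's English description precedes it below -/
import Mathlib

section
/- Let A ∈ ℤ^{n×n} be nonsingular with Smith form S = diag(s_1,…,s_n), and let M ∈ ℤ^{n×n} be a reduced Smith massager for 2A, i.e., a Smith massager for 2A all of whose entries in column j lie in the interval [0, 2s_j). Let λ = 105·max(n, ⌈(det(2S))^{1/n}⌉), where ⌈(det(2S))^{1/n}⌉ is the least positive integer t with t^n ≥ det(2S). Then the number of matrices R ∈ ℤ^{n×n} with all entries in {0, 1, …, λ−1} for which there exists a prime p such that the last n−1 columns of M + 2RS are linearly dependent over the field ℤ/(p) is strictly less than λ^{n²}/2. Equivalently, if the entries of R are chosen independently and uniformly at random from {0,…,λ−1}, the probability that some prime p makes the last n−1 columns of M + 2RS linearly dependent modulo p is less than 1/2. -/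
open Matrix

/-- A square integer matrix is unimodular if its determinant is `±1`. -/
def IsUnimodular {ι : Type*} [Fintype ι] [DecidableEq ι] (U : Matrix ι ι ℤ) : Prop :=
  U.det = 1 ∨ U.det = -1

/-- `S` is a Smith form of `A`: it is diagonal with positive diagonal entries
forming a divisibility chain, and `P * A * Q = S` for some unimodular `P`, `Q`. -/
def IsSmithForm {n : ℕ} (A S : Matrix (Fin n) (Fin n) ℤ) : Prop :=
  (∀ i j : Fin n, i ≠ j → S i j = 0) ∧ (∀ i, 0 < S i i) ∧
  (∀ i j : Fin n, i ≤ j → S i i ∣ S j j) ∧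
  ∃ P Q : Matrix (Fin n) (Fin n) ℤ, IsUnimodular P ∧ IsUnimodular Q ∧ P * A * Q = S

/-- `B ≡ C (colmod S)`: column `j` of `B` is congruent to column `j` of `C`
modulo the `j`-th diagonal entry of `S`. -/
def ColMod {ι : Type*} [Fintype ι] (S B C : Matrix ι ι ℤ) : Prop :=
  ∀ i j, S j j ∣ (B i j - C i j)

/-- `M` is a Smith massager for `A` (with Smith form `S`):
`A * M ≡ 0 (colmod S)` and `W * M ≡ I (colmod S)` for some integer matrix `W`. -/
def IsSmithMassager {ι : Type*} [Fintype ι] [DecidableEq ι] (A S M : Matrix ι ι ℤ) : Prop :=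
  ColMod S (A * M) 0 ∧ ∃ W : Matrix ι ι ℤ, ColMod S (W * M) 1

/-!
Expose the columns of `M + 2RS` from right to left. If a prime `p` makes the last `n - 1` columns
dependent modulo `p`, some column `j` depends modulo `p` on the independent columns to its right.
Then `p` does not divide `2 s_j`: otherwise `p` divides `2 s_k` for all `k ≥ j`, so the massager's
cofactor `W` maps the columns from `j` on to unit vectors modulo `p`. Hence `p` is odd, and the
perturbation of column `j` modulo `p` is an invertible multiple of the random column of `R`.

Let `d` be the number of columns to the right of `j`. For a fixed `p < λ`, the `d` rows of a minor
nonzero modulo `p` determine the other entries of the random column modulo `p`, which leaves at most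
`⌈λ/p⌉^(n-d) λ^d` choices. Primes `p ≥ λ` are too many for such a sum, but all those not dividing a
fixed nonzero `d × d` minor divide the minor bordered by column `j` and one further row. Both minors
are at most `λ^(3n)`, so when nonzero they have at most `3n` prime factors `p ≥ λ`, and the bordered
one vanishes for at most `λ^(n-1)` choices of the column. Summing over `j`, the odd primes `p < λ`
contribute a proportion of at most `0.46` of all matrices and the other terms less than `0.04`,
because `λ ≥ 105 n`.
-/

open Finset

section BorderedMinor

variable {κ ι R : Type*} [Fintype ι] [DecidableEq ι]

theorem exists_det_submatrix_ne_zero {K : Type*} [Field K] [Finite κ] {C : Matrix κ ι K}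
    (hC : LinearIndependent K C.col) : ∃ f : ι → κ, (C.submatrix f id).det ≠ 0 := by
  have := Fintype.ofFinite κ
  obtain ⟨b, a, ha, hspan, hindep⟩ := exists_linearIndependent' K C.row
  have := Fintype.ofInjective a ha
  have hcard : Fintype.card ι = Fintype.card b := by
    rw [← finrank_span_eq_card hindep, hspan, ← C.rank_eq_finrank_span_row, ← C.rank_transpose]
    exact (LinearIndependent.rank_matrix (M := Cᵀ) hC).symm
  let e : ι ≃ b := Fintype.equivOfCardEq hcard
  have hrows : LinearIndependent K (C.submatrix (a ∘ e) id).row := hindep.comp e e.injective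
  rw [linearIndependent_rows_iff_isUnit, isUnit_iff_isUnit_det] at hrows
  exact ⟨a ∘ e, hrows.ne_zero⟩

theorem injective_of_det_submatrix_ne_zero [CommRing R] {C : Matrix κ ι R} {f : ι → κ}
    (hf : (C.submatrix f id).det ≠ 0) : Function.Injective f := by
  intro i j hij
  by_contra hne
  exact hf (det_zero_of_row_eq hne (congrArg C hij))

theorem eq_of_mem_span_range_col [CommRing R] [IsDomain R] {C : Matrix κ ι R} {f : ι → κ}
    (hf : (C.submatrix f id).det ≠ 0) {v w : κ → R}
    (hv : v ∈ Submodule.span R (Set.range C.col)) (hw : w ∈ Submodule.span R (Set.range C.col))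
    (hvw : ∀ i, v (f i) = w (f i)) : v = w := by
  rw [← range_mulVecLin] at hv hw
  obtain ⟨c, rfl⟩ := hv
  obtain ⟨d, rfl⟩ := hw
  have hker : C.submatrix f id *ᵥ (c - d) = 0 := by
    rw [mulVec_sub, sub_eq_zero]
    exact funext hvw
  rw [sub_eq_zero.1 (eq_zero_of_mulVec_eq_zero hf hker)]

/-- The minor of the augmented matrix `[C | v]` on the rows `f` and `r`. When `v` lies in the column
span of `C` it vanishes, so over `ℤ` it detects the primes modulo which `v` depends on `C`. -/
def borderedMinor [CommRing R] (C : Matrix κ ι R) (v : κ → R) (f : ι → κ) (r : κ) : R :=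
  ((fromCols C (replicateCol Unit v)).submatrix (Sum.elim f fun _ => r) id).det

theorem borderedMinor_sub [CommRing R] (C : Matrix κ ι R) {v w : κ → R} {f : ι → κ}
    (hvw : ∀ i, v (f i) = w (f i)) (r : κ) :
    borderedMinor C v f r - borderedMinor C w f r = (C.submatrix f id).det * (v r - w r) := by
  let B (x : κ → R) : Matrix (ι ⊕ Unit) (ι ⊕ Unit) R :=
    (fromCols C (replicateCol Unit x)).submatrix (Sum.elim f fun _ => r) id
  have hupdate (x : κ → R) :
      B x = (B w).updateCol (Sum.inr ()) fun i => x (Sum.elim f (fun _ => r) i) := by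
    ext i (j | j) <;> simp [B]
  have hblocks : B (v - w) = fromBlocks (C.submatrix f id) 0
      (of fun _ k => C r k) (of fun _ _ => v r - w r) := by
    ext (i | i) (j | j) <;> simp [B, hvw]
  have hadd : (B v).det = (B w).det + (B (v - w)).det := by
    rw [hupdate v, hupdate (v - w)]
    nth_rw 2 [hupdate w]
    rw [← det_updateCol_add]
    congr 2
    ext i
    simp
  calc (B v).det - (B w).det = (B (v - w)).det := by rw [hadd, add_sub_cancel_left]
    _ = (C.submatrix f id).det * (v r - w r) := by
      rw [hblocks, det_fromBlocks_zero₁₂]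
      simp

theorem borderedMinor_eq_zero_of_mem_span [CommRing R] [IsDomain R] {C : Matrix κ ι R} {v : κ → R}
    (hv : v ∈ Submodule.span R (Set.range C.col)) (f : ι → κ) (r : κ) :
    borderedMinor C v f r = 0 := by
  rw [← range_mulVecLin] at hv
  obtain ⟨c, rfl⟩ := hv
  refine exists_mulVec_eq_zero_iff.1 ⟨Sum.elim c fun _ => -1, fun h => ?_, ?_⟩
  · simpa using congrFun h (Sum.inr ())
  · have : fromCols C (replicateCol Unit (C.mulVecLin c)) *ᵥ Sum.elim c (fun _ => -1) = 0 := by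
      ext
      simp [mulVec, dotProduct]
    exact funext fun i => congrFun this _

theorem map_borderedMinor {S : Type*} [CommRing R] [CommRing S] (φ : R →+* S) (C : Matrix κ ι R)
    (v : κ → R) (f : ι → κ) (r : κ) :
    φ (borderedMinor C v f r) = borderedMinor (C.map φ) (fun i => φ (v i)) f r := by
  rw [borderedMinor, RingHom.map_det]
  congr 1
  ext i (j | j) <;> rfl

theorem abv_det_le_factorial_smul_prod {S : Type*} [CommRing R] [Nontrivial R] [CommRing S]
    [LinearOrder S] [IsStrictOrderedRing S] {A : Matrix ι ι R} {abv : AbsoluteValue R S} {b : ι → S}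
    (hb : ∀ i j, abv (A i j) ≤ b j) :
    abv A.det ≤ (Fintype.card ι).factorial • ∏ j, b j :=
  calc
    abv A.det ≤ ∑ σ : Equiv.Perm ι, abv (Equiv.Perm.sign σ • ∏ i, A (σ i) i) := by
      rw [det_apply]
      exact abv.sum_le _ _
    _ = ∑ σ : Equiv.Perm ι, ∏ i, abv (A (σ i) i) :=
      sum_congr rfl fun σ _ => by rw [abv.map_units_int_smul, abv.map_prod]
    _ ≤ ∑ _σ : Equiv.Perm ι, ∏ j, b j := by
      gcongr
      exact hb _ _
    _ = (Fintype.card ι).factorial • ∏ j, b j := by simp [Fintype.card_perm]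

end BorderedMinor

section ReductionModPrime

variable {κ ι : Type*}

/-- The columns of the integer matrix `C` are linearly independent modulo `p`. -/
def IndepColsMod (p : ℕ) (C : Matrix κ ι ℤ) : Prop :=
  LinearIndependent (ZMod p) (C.map (Int.cast : ℤ → ZMod p)).col

/-- The prime `p` causes a linear dependence of `v` on the independent columns of `C`, although `v`
may be shifted freely modulo `p` by multiples of `a`. -/
structure IsDependencePrime (C : Matrix κ ι ℤ) (a : ℤ) (v : κ → ℤ) (p : ℕ) : Prop where
  prime : p.Prime
  not_dvd : ¬ (p : ℤ) ∣ a
  indepColsMod : IndepColsMod p C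
  mem_span : (fun i => (v i : ZMod p)) ∈
    Submodule.span (ZMod p) (Set.range (C.map (Int.cast : ℤ → ZMod p)).col)

/-- The column `u + a x` obtained from `u` by a random perturbation `x` with entries below `lam`. -/
def shiftedCol {lam : ℕ} (u : κ → ℤ) (a : ℤ) (x : κ → Fin lam) : κ → ℤ :=
  fun i => u i + a * (x i : ℕ)

namespace IsDependencePrime

variable {C : Matrix κ ι ℤ} {a : ℤ} {p : ℕ}

theorem exists_eq_two_mul_add_three {v : κ → ℤ}
    (h : IsDependencePrime C a v p) (ha : 2 ∣ a) : ∃ k, p = 2 * k + 3 := by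
  have hp2 : p ≠ 2 := by
    rintro rfl
    exact h.not_dvd ha
  obtain ⟨k, rfl⟩ := h.prime.odd_of_ne_two hp2
  have := h.prime.two_le
  exact ⟨k - 1, by omega⟩

end IsDependencePrime

variable [Fintype ι] [DecidableEq ι]

theorem borderedMinor_shiftedCol_eq {lam : ℕ} {C : Matrix κ ι ℤ} {u : κ → ℤ} {a : ℤ}
    {f : ι → κ} {r : κ} {x y : κ → Fin lam} (hxy : ∀ i, x (f i) = y (f i))
    (hr : x r = y r) :
    borderedMinor C (shiftedCol u a x) f r = borderedMinor C (shiftedCol u a y) f r := by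
  rw [← sub_eq_zero, borderedMinor_sub C (fun i => by simp [shiftedCol, hxy])]
  simp [shiftedCol, hr]

theorem IndepColsMod.exists_not_dvd_det_submatrix [Finite κ] {p : ℕ} (hp : p.Prime)
    {C : Matrix κ ι ℤ} (hC : IndepColsMod p C) :
    ∃ f : ι → κ, ¬ (p : ℤ) ∣ (C.submatrix f id).det := by
  have := Fact.mk hp
  obtain ⟨f, hf⟩ := exists_det_submatrix_ne_zero hC
  refine ⟨f, ?_⟩
  rw [← ZMod.intCast_zmod_eq_zero_iff_dvd, Int.cast_det]
  exact hf

namespace IsDependencePrime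

variable {C : Matrix κ ι ℤ} {a : ℤ} {p : ℕ}

theorem dvd_borderedMinor {v : κ → ℤ} (h : IsDependencePrime C a v p) (f : ι → κ) (r : κ) :
    (p : ℤ) ∣ borderedMinor C v f r := by
  have := Fact.mk h.prime
  rw [← ZMod.intCast_zmod_eq_zero_iff_dvd]
  exact (map_borderedMinor (Int.castRingHom (ZMod p)) C v f r).trans
    (borderedMinor_eq_zero_of_mem_span h.mem_span f r)

theorem modEq_of_eq_on_minor {lam : ℕ} {u : κ → ℤ} {x y : κ → Fin lam}
    (hx : IsDependencePrime C a (shiftedCol u a x) p)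
    (hy : IsDependencePrime C a (shiftedCol u a y) p)
    {f : ι → κ} (hf : ¬ (p : ℤ) ∣ (C.submatrix f id).det) (hxy : ∀ i, x (f i) = y (f i)) (r : κ) :
    (x r : ℕ) ≡ y r [MOD p] := by
  have := Fact.mk hx.prime
  have ha : (a : ZMod p) ≠ 0 := fun h => hx.not_dvd ((ZMod.intCast_zmod_eq_zero_iff_dvd a p).1 h)
  have hf' : ((C.map (Int.cast : ℤ → ZMod p)).submatrix f id).det ≠ 0 := by
    rwa [submatrix_map, ← Int.cast_det, Ne, ZMod.intCast_zmod_eq_zero_iff_dvd]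
  have hcol := eq_of_mem_span_range_col hf' hx.mem_span hy.mem_span fun i => by
    simp [shiftedCol, hxy]
  simpa [shiftedCol, ha, ZMod.natCast_eq_natCast_iff] using congrFun hcol r

end IsDependencePrime

end ReductionModPrime

section Counting

theorem card_filter_le_primeFactors_le {N b K : ℕ} (hN : N ≠ 0) (hb : 1 < b) (h : N ≤ b ^ K) :
    #{p ∈ N.primeFactors | b ≤ p} ≤ K := by
  refine (Nat.pow_le_pow_iff_right hb).1 (le_trans ?_ h)
  calc b ^ #{p ∈ N.primeFactors | b ≤ p}
      ≤ ∏ p ∈ N.primeFactors with b ≤ p, p := pow_card_le_prod _ _ _ (by simp)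
    _ ≤ ∏ p ∈ N.primeFactors, p :=
      prod_le_prod_of_subset_of_one_le' (filter_subset _ _)
        fun p hp _ => (Nat.prime_of_mem_primeFactors hp).one_le
    _ ≤ N := Nat.le_of_dvd (Nat.pos_of_ne_zero hN) (Nat.prod_primeFactors_dvd N)

theorem ceilDiv_le_one {m n : ℕ} (h : m ≤ n) : m ⌈/⌉ n ≤ 1 := by
  obtain rfl | hn := n.eq_zero_or_pos
  · simp
  · exact (ceilDiv_le_iff_le_mul hn).2 (by omega)

variable {κ : Type*} [Fintype κ] [DecidableEq κ] {lam : ℕ}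

theorem card_le_ceilDiv_pow_mul_pow {p : ℕ} (hp : 0 < p) (s : Finset (κ → Fin lam)) (J : Finset κ)
    (h : ∀ x ∈ s, ∀ y ∈ s, (∀ i ∈ J, x i = y i) → ∀ i, (x i : ℕ) ≡ y i [MOD p]) :
    #s ≤ (lam ⌈/⌉ p) ^ #Jᶜ * lam ^ #J := by
  let box : Finset (κ → ℕ) :=
    Fintype.piFinset fun i => if i ∈ J then range lam else range (lam ⌈/⌉ p)
  have hbox : #box = (lam ⌈/⌉ p) ^ #Jᶜ * lam ^ #J := by
    simp [box, Fintype.card_piFinset, apply_ite card, prod_ite, mul_comm, filter_not,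
      compl_eq_univ_sdiff]
  rw [← hbox]
  refine card_le_card_of_injOn (fun x i => if i ∈ J then (x i : ℕ) else x i / p) ?_ ?_
  · intro x _
    refine Fintype.mem_piFinset.2 fun i => ?_
    have hdiv : (x i : ℕ) / p < lam ⌈/⌉ p := by
      rw [← not_le, ceilDiv_le_iff_le_mul hp, not_le]
      exact (Nat.mul_div_le _ _).trans_lt (x i).isLt
    by_cases hi : i ∈ J <;> simp [hi, hdiv]
  · intro x hx y hy hxy
    have hJ : ∀ i ∈ J, x i = y i := fun i hi => Fin.ext (by simpa [hi] using congrFun hxy i)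
    funext i
    by_cases hi : i ∈ J
    · exact hJ i hi
    · have hdiv : (x i : ℕ) / p = y i / p := by simpa [hi] using congrFun hxy i
      have hmod : (x i : ℕ) % p = y i % p := h x hx y hy hJ i
      rw [Fin.ext_iff, ← Nat.div_add_mod (x i : ℕ) p, hdiv, hmod, Nat.div_add_mod]

end Counting

section OneColumn

variable {κ ι : Type*} [Fintype κ] [DecidableEq κ] [Fintype ι] {lam K : ℕ}
  {C : Matrix κ ι ℤ} {u : κ → ℤ} {a : ℤ} {f : ι → κ} {r : κ}

open scoped Classical in
theorem card_isDependencePrime_le {p : ℕ} :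
    #{x : κ → Fin lam | IsDependencePrime C a (shiftedCol u a x) p} ≤
      (lam ⌈/⌉ p) ^ (Fintype.card κ - Fintype.card ι) * lam ^ Fintype.card ι := by
  classical
  by_cases h : p.Prime ∧ IndepColsMod p C
  · obtain ⟨f, hf⟩ := h.2.exists_not_dvd_det_submatrix h.1
    have hinj : Function.Injective f :=
      injective_of_det_submatrix_ne_zero fun h0 => hf (h0 ▸ dvd_zero _)
    have hJ : #(univ.image f) = Fintype.card ι := card_image_of_injective _ hinj
    rw [← hJ, ← card_compl]
    refine card_le_ceilDiv_pow_mul_pow h.1.pos _ _ fun x hx y hy hxy r => ?_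
    exact (mem_filter_univ x).1 hx |>.modEq_of_eq_on_minor ((mem_filter_univ y).1 hy) hf
      (fun i => hxy _ (mem_image_of_mem f (mem_univ i))) r
  · rw [filter_false_of_mem fun x _ hx => h ⟨hx.prime, hx.indepColsMod⟩]
    simp

open scoped Classical in
theorem card_isDependencePrime_dvd_le (hlam : 1 < lam) {D : ℤ} (hD : D ≠ 0)
    (hDK : D.natAbs ≤ lam ^ K) :
    #{x : κ → Fin lam | ∃ p : ℕ, lam ≤ p ∧ (p : ℤ) ∣ D ∧
      IsDependencePrime C a (shiftedCol u a x) p} ≤ K * lam ^ Fintype.card ι := by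
  let P : Finset ℕ := {p ∈ D.natAbs.primeFactors | lam ≤ p}
  let bad (p : ℕ) : Finset (κ → Fin lam) := {x | IsDependencePrime C a (shiftedCol u a x) p}
  calc _ ≤ #(P.biUnion bad) := by
        refine card_le_card fun x hx => ?_
        obtain ⟨p, hlp, hpD, hp⟩ := (mem_filter_univ x).1 hx
        refine mem_biUnion.2 ⟨p, ?_, (mem_filter_univ x).2 hp⟩
        simpa [P, hp.prime, hD, hlp] using Int.natCast_dvd.1 hpD
    _ ≤ #P * lam ^ Fintype.card ι := by
      refine card_biUnion_le_card_mul _ _ _ fun p hp => card_isDependencePrime_le.trans ?_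
      exact mul_le_of_le_one_left' (pow_le_one' (ceilDiv_le_one (mem_filter.1 hp).2) _)
    _ ≤ K * lam ^ Fintype.card ι := by
      gcongr
      exact card_filter_le_primeFactors_le (Int.natAbs_ne_zero.2 hD) hlam hDK

open scoped Classical in
theorem card_exists_lt_isDependencePrime_le (ha : 2 ∣ a) :
    #{x : κ → Fin lam | ∃ p < lam, IsDependencePrime C a (shiftedCol u a x) p} ≤
      ∑ k ∈ range (lam / 2), (lam ⌈/⌉ (2 * k + 3)) ^ (Fintype.card κ - Fintype.card ι) *
        lam ^ Fintype.card ι := by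
  let bad (p : ℕ) : Finset (κ → Fin lam) := {x | IsDependencePrime C a (shiftedCol u a x) p}
  calc _ ≤ #((range (lam / 2)).biUnion fun k => bad (2 * k + 3)) := by
        refine card_le_card fun x hx => ?_
        obtain ⟨p, hpl, hp⟩ := (mem_filter_univ x).1 hx
        obtain ⟨k, rfl⟩ := hp.exists_eq_two_mul_add_three ha
        exact mem_biUnion.2 ⟨k, mem_range.2 (by omega), (mem_filter_univ x).2 hp⟩
    _ ≤ _ := card_biUnion_le.trans (sum_le_sum fun k _ => card_isDependencePrime_le)

variable [DecidableEq ι]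

theorem card_borderedMinor_eq_zero_le (ha : a ≠ 0) (hf : (C.submatrix f id).det ≠ 0)
    (hr : r ∉ Set.range f) :
    #{x : κ → Fin lam | borderedMinor C (shiftedCol u a x) f r = 0} ≤
      lam ^ (Fintype.card κ - 1) := by
  let restrict (x : κ → Fin lam) (i : {i // i ≠ r}) : Fin lam := x i
  refine (card_le_card_of_injOn (t := univ) restrict (by simp) fun x hx y hy hxy => ?_).trans_eq
    (by simp)
  have hne {i : κ} (hi : i ≠ r) : x i = y i := congrFun hxy ⟨i, hi⟩
  have hfr (k : ι) : x (f k) = y (f k) := hne fun h => hr ⟨k, h⟩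
  funext i
  obtain rfl | hi := eq_or_ne i r
  · have hsub := borderedMinor_sub C (v := shiftedCol u a x) (w := shiftedCol u a y)
      (f := f) (fun k => by simp [shiftedCol, hfr]) i
    rw [(mem_filter_univ x).1 hx, (mem_filter_univ y).1 hy, sub_zero] at hsub
    have hcol := sub_eq_zero.1 ((mul_eq_zero.1 hsub.symm).resolve_left hf)
    exact Fin.ext (by simpa [shiftedCol, ha] using hcol)
  · exact hne hi

open scoped Classical in
theorem card_isDependencePrime_borderedMinor_ne_zero_le (hlam : 1 < lam)
    (hK : ∀ x : κ → Fin lam, (borderedMinor C (shiftedCol u a x) f r).natAbs ≤ lam ^ K) :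
    #{x : κ → Fin lam | borderedMinor C (shiftedCol u a x) f r ≠ 0 ∧
      ∃ p : ℕ, lam ≤ p ∧ ¬ (p : ℤ) ∣ (C.submatrix f id).det ∧
        IsDependencePrime C a (shiftedCol u a x) p} ≤ K * lam ^ (Fintype.card ι + 1) := by
  set s : Finset (κ → Fin lam) := {x | borderedMinor C (shiftedCol u a x) f r ≠ 0 ∧
    ∃ p : ℕ, lam ≤ p ∧ ¬ (p : ℤ) ∣ (C.submatrix f id).det ∧
      IsDependencePrime C a (shiftedCol u a x) p}
  choose! q hlq hqD hq using fun x (hx : x ∈ s) => ((mem_filter_univ x).1 hx).2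
  let restrict (x : κ → Fin lam) : Option ι → Fin lam := fun o => x (o.elim r f)
  have hf {x y : κ → Fin lam} (h : restrict x = restrict y) (i : ι) : x (f i) = y (f i) :=
    congrFun h (some i)
  have hfiber (b : Option ι → Fin lam) : #{x ∈ s | restrict x = b} ≤ K := by
    obtain hempty | ⟨x₀, hx₀⟩ := {x ∈ s | restrict x = b}.eq_empty_or_nonempty
    · simp [hempty]
    obtain ⟨hx₀s, rfl⟩ := mem_filter.1 hx₀
    have hN := ((mem_filter_univ x₀).1 hx₀s).1
    refine le_trans ?_ (card_filter_le_primeFactors_le (Int.natAbs_ne_zero.2 hN) hlam (hK x₀))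
    refine card_le_card_of_injOn q (fun x hx => ?_) fun x hx y hy hxy => ?_
    · obtain ⟨hxs, hxb⟩ := mem_filter.1 hx
      have hdvd := (hq x hxs).dvd_borderedMinor f r
      rw [borderedMinor_shiftedCol_eq (hf hxb) (show x r = x₀ r from congrFun hxb none)] at hdvd
      simpa [(hq x hxs).prime, hlq x hxs, hN] using Int.natCast_dvd.1 hdvd
    · obtain ⟨hxs, hxb⟩ := mem_filter.1 hx
      obtain ⟨hys, hyb⟩ := mem_filter.1 hy
      funext i
      have hmod := (hq x hxs).modEq_of_eq_on_minor (hxy ▸ hq y hys) (hqD x hxs)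
        (hf (hxb.trans hyb.symm)) i
      have hlq := hlq x hxs
      exact Fin.ext (hmod.eq_of_lt_of_lt (by omega) (by omega))
  calc #s ≤ K * #(univ : Finset (Option ι → Fin lam)) :=
        card_le_mul_card_image_of_maps_to (f := restrict) (fun _ _ => mem_univ _) K
          fun b _ => hfiber b
    _ = K * lam ^ (Fintype.card ι + 1) := by simp

/-- The union bound for a random column of length `n` over `d` columns, two of whose minors have at
most `K` prime factors `p ≥ lam` each: small odd primes, a vanishing bordered minor, large primes
dividing the bordered minor, and large primes dividing the minor of the `d` columns. -/
def columnBound (lam n d K : ℕ) : ℕ :=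
  ∑ k ∈ range (lam / 2), (lam ⌈/⌉ (2 * k + 3)) ^ (n - d) * lam ^ d + lam ^ (n - 1) +
    K * lam ^ (d + 1) + K * lam ^ d

open scoped Classical in
theorem card_exists_isDependencePrime_le (ha : a ≠ 0) (ha2 : 2 ∣ a)
    (hcard : Fintype.card ι < Fintype.card κ) (hlam : 1 < lam)
    (hD : ∀ f : ι → κ, (C.submatrix f id).det.natAbs ≤ lam ^ K)
    (hN : ∀ (f : ι → κ) (r : κ) (x : κ → Fin lam),
      (borderedMinor C (shiftedCol u a x) f r).natAbs ≤ lam ^ K) :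
    #{x : κ → Fin lam | ∃ p, IsDependencePrime C a (shiftedCol u a x) p} ≤
      columnBound lam (Fintype.card κ) (Fintype.card ι) K := by
  by_cases hC : ∀ f : ι → κ, (C.submatrix f id).det = 0
  · rw [filter_false_of_mem]
    · simp
    · rintro x - ⟨p, hp⟩
      obtain ⟨f, hf⟩ := hp.indepColsMod.exists_not_dvd_det_submatrix hp.prime
      exact hf (hC f ▸ dvd_zero _)
  push Not at hC
  obtain ⟨f, hf⟩ := hC
  obtain ⟨r, hr⟩ : ∃ r, r ∉ Set.range f := by
    by_contra! h
    exact hcard.not_ge (Fintype.card_le_of_surjective f h)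
  let Dep (x : κ → Fin lam) (p : ℕ) : Prop := IsDependencePrime C a (shiftedCol u a x) p
  let minor (x : κ → Fin lam) : ℤ := borderedMinor C (shiftedCol u a x) f r
  let D : ℤ := (C.submatrix f id).det
  let viaSmallPrime : Finset (κ → Fin lam) := {x | ∃ p < lam, Dep x p}
  let viaZero : Finset (κ → Fin lam) := {x | minor x = 0}
  let viaMinor : Finset (κ → Fin lam) :=
    {x | minor x ≠ 0 ∧ ∃ p : ℕ, lam ≤ p ∧ ¬ (p : ℤ) ∣ D ∧ Dep x p}
  let viaDet : Finset (κ → Fin lam) := {x | ∃ p : ℕ, lam ≤ p ∧ (p : ℤ) ∣ D ∧ Dep x p}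
  calc #{x : κ → Fin lam | ∃ p, Dep x p}
      ≤ #(viaSmallPrime ∪ viaZero ∪ viaMinor ∪ viaDet) := by
        refine card_le_card fun x hx => ?_
        obtain ⟨p, hp⟩ := (mem_filter_univ x).1 hx
        simp only [viaSmallPrime, viaZero, viaMinor, viaDet, mem_union, mem_filter_univ]
        obtain hpl | hlp := lt_or_ge p lam
        · exact .inl (.inl (.inl ⟨p, hpl, hp⟩))
        obtain hpD | hpD := em ((p : ℤ) ∣ D)
        · exact .inr ⟨p, hlp, hpD, hp⟩
        obtain hx0 | hx0 := eq_or_ne (minor x) 0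
        · exact .inl (.inl (.inr hx0))
        · exact .inl (.inr ⟨hx0, p, hlp, hpD, hp⟩)
    _ ≤ _ :=
      (card_union_le _ _).trans <| add_le_add ((card_union_le _ _).trans <| add_le_add
        ((card_union_le _ _).trans <| add_le_add (card_exists_lt_isDependencePrime_le ha2)
          (card_borderedMinor_eq_zero_le ha hf hr))
        (card_isDependencePrime_borderedMinor_ne_zero_le hlam (hN f r)))
        (card_isDependencePrime_dvd_le hlam hf (hD f))

end OneColumn

section TrailingColumns

variable {κ ι : Type*}

theorem linearIndepOn_of_mulVec_eq_single {R : Type*} [CommRing R] [Fintype κ] [Finite ι]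
    [DecidableEq ι] {W : Matrix ι κ R} {v : ι → κ → R} {s : Set ι}
    (h : ∀ k ∈ s, W *ᵥ v k = Pi.single k 1) : LinearIndepOn R v s := by
  refine LinearIndependent.of_comp W.mulVecLin ?_
  have hsingle : W.mulVecLin ∘ (fun k : s => v k) = Pi.basisFun R ι ∘ ((↑) : s → ι) := by
    ext1 k
    simpa using h k k.2
  rw [hsingle]
  exact (Pi.basisFun R ι).linearIndependent.comp _ Subtype.val_injective

/-- The prime `p` is a dependence prime for column `j` of `B` over the columns to its right. -/
def IsDependencePrimeAt [Preorder ι] (B : Matrix κ ι ℤ) (a : ι → ℤ) (j : ι) (p : ℕ) : Prop :=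
  IsDependencePrime (B.submatrix id ((↑) : Set.Ioi j → ι)) (a j) (B.col j) p

theorem linearIndepOn_col_of_forall_not_isDependencePrimeAt [Fintype κ] [Finite ι] [LinearOrder ι]
    {W : Matrix ι κ ℤ} {B : Matrix κ ι ℤ} {a : ι → ℤ} {p : ℕ} (hp : p.Prime)
    (hW : ∀ i j, a j ∣ (W * B) i j - (1 : Matrix ι ι ℤ) i j) (ha : ∀ i j, i ≤ j → a i ∣ a j)
    {s : Finset ι} (hs : IsUpperSet (s : Set ι)) (h : ∀ j ∈ s, ¬ IsDependencePrimeAt B a j p) :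
    LinearIndepOn (ZMod p) (B.map (Int.cast : ℤ → ZMod p)).col s := by
  have := Fact.mk hp
  induction s using Finset.induction_on_min with
  | empty => simp
  | insert j t hjt ih =>
    have ht : (t : Set ι) = Set.Ioi j := by
      ext k
      refine ⟨hjt k, fun hk => ?_⟩
      have hk' : k ∈ insert j t := hs hk.le (by simp)
      exact (mem_insert.1 hk').resolve_left (Set.mem_Ioi.1 hk).ne'
    have hindep := ih (ht ▸ isUpperSet_Ioi j) fun k hk => h k (mem_insert_of_mem hk)
    by_cases hpj : (p : ℤ) ∣ a j
    · refine linearIndepOn_of_mulVec_eq_single (W := W.map Int.cast) fun k hk => ?_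
      have hjk : j ≤ k := (mem_insert.1 hk).elim Eq.ge fun hk => (hjt k hk).le
      ext i
      have hik : (p : ℤ) ∣ (W * B) i k - (1 : Matrix ι ι ℤ) i k :=
        (hpj.trans (ha j k hjk)).trans (hW i k)
      rw [← ZMod.intCast_zmod_eq_zero_iff_dvd, Int.cast_sub, sub_eq_zero] at hik
      calc _ = (((W * B) i k : ℤ) : ZMod p) := by simp [mulVec, mul_apply, dotProduct]
        _ = Pi.single (M := fun _ => ZMod p) k 1 i := by
          rw [hik]
          simp [one_apply, Pi.single_apply]
    · rw [coe_insert, ht] at *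
      refine hindep.insert fun hspan => h j (mem_insert_self j t) ⟨hp, hpj, hindep, ?_⟩
      rwa [Set.image_eq_range] at hspan

end TrailingColumns

section Perturbation

variable {κ ι : Type*}

theorem natCard_box_eq_card_filter [Fintype κ] [Fintype ι] [DecidableEq κ] [DecidableEq ι]
    {lam : ℕ} (P : Matrix κ ι ℤ → Prop)
    [DecidablePred fun R : Matrix κ ι (Fin lam) => P (R.map fun x => ((x : ℕ) : ℤ))] :
    Nat.card {R : Matrix κ ι ℤ // (∀ i j, 0 ≤ R i j ∧ R i j < (lam : ℤ)) ∧ P R} =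
      #{R : Matrix κ ι (Fin lam) | P (R.map fun x => ((x : ℕ) : ℤ))} := by
  rw [← Fintype.card_subtype, ← Nat.card_eq_fintype_card]
  symm
  refine Nat.card_eq_of_bijective
    (fun R => ⟨R.1.map fun x => ((x : ℕ) : ℤ), fun i j => by simp, R.2⟩) ⟨fun R T h => ?_, ?_⟩
  · ext i j
    simpa using congrFun₂ (congrArg Subtype.val h) i j
  · rintro ⟨R, hR, hP⟩
    have hmap : (of fun i j => (⟨(R i j).toNat, by grind⟩ : Fin lam)).map
        (fun x => ((x : ℕ) : ℤ)) = R := by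
      ext i j
      simpa using (hR i j).1
    exact ⟨⟨_, by rwa [hmap]⟩, Subtype.ext hmap⟩

/-- The matrix `M + R diag(a)`: column `j` of `M` is shifted by `a j` times column `j` of `R`, whose
entries are below `lam`. -/
def perturb [Fintype ι] [DecidableEq ι] {lam : ℕ} (M : Matrix κ ι ℤ) (a : ι → ℤ)
    (R : Matrix κ ι (Fin lam)) : Matrix κ ι ℤ :=
  M + R.map (fun x => ((x : ℕ) : ℤ)) * diagonal a

variable [Fintype ι] {lam : ℕ} {M : Matrix κ ι ℤ} {a : ι → ℤ}

theorem abs_det_submatrix_le {β : Type*} [Fintype β] [DecidableEq β] {B : Matrix κ ι ℤ}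
    (ha : ∀ j, 0 < a j) (hB : ∀ i j, |B i j| ≤ a j * lam) (hpos : 0 < lam)
    (hlam : Fintype.card ι ≤ lam) (hprod : ∏ j, a j ≤ lam ^ Fintype.card ι) (f : β → κ) {g : β → ι}
    (hg : Function.Injective g) :
    |(B.submatrix f g).det| ≤ (lam : ℤ) ^ (3 * Fintype.card ι) := by
  have hcard : Fintype.card β ≤ Fintype.card ι := Fintype.card_le_of_injective g hg
  have hsub : ∏ k, a (g k) ≤ lam ^ Fintype.card ι := by
    refine (Int.le_of_dvd (prod_pos fun j _ => ha j) ?_).trans hprod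
    exact (prod_map univ ⟨g, hg⟩ a).symm.dvd.trans
      (prod_dvd_prod_of_subset _ _ _ (subset_univ _))
  have hfactorial : ((Fintype.card β).factorial : ℤ) ≤ lam ^ Fintype.card ι := by
    exact_mod_cast (Nat.factorial_le_pow _).trans
      ((Nat.pow_le_pow_left (hcard.trans hlam) _).trans (Nat.pow_le_pow_right hpos hcard))
  calc |(B.submatrix f g).det|
      ≤ (Fintype.card β).factorial • ∏ k, (a (g k) * lam) :=
        abv_det_le_factorial_smul_prod (abv := .abs) fun i k => hB (f i) (g k)
    _ = (Fintype.card β).factorial * ((∏ k, a (g k)) * lam ^ Fintype.card β) := by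
      simp [prod_mul_distrib]
    _ ≤ lam ^ Fintype.card ι * (lam ^ Fintype.card ι * lam ^ Fintype.card ι) := by
      gcongr
      · exact mul_nonneg (prod_nonneg fun k _ => (ha _).le) (by positivity)
      · exact_mod_cast hpos
    _ = lam ^ (3 * Fintype.card ι) := by ring

variable [DecidableEq ι]

theorem col_perturb (R : Matrix κ ι (Fin lam)) (j : ι) :
    (perturb M a R).col j = shiftedCol (M.col j) (a j) (R.col j) := by
  ext i
  simp [perturb, shiftedCol, mul_comm]

theorem dvd_mul_perturb_sub [Fintype κ] {W : Matrix ι κ ℤ} {E : Matrix ι ι ℤ}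
    (hW : ∀ i j, a j ∣ (W * M) i j - E i j) (R : Matrix κ ι (Fin lam)) (i j : ι) :
    a j ∣ (W * perturb M a R) i j - E i j := by
  rw [perturb, Matrix.mul_add, ← Matrix.mul_assoc, Matrix.add_apply, mul_diagonal,
    add_sub_right_comm]
  exact dvd_add (hW i j) (dvd_mul_left _ _)

theorem abs_shiftedCol_le {u : κ → ℤ} {b : ℤ} (hu : ∀ i, |u i| ≤ b) (x : κ → Fin lam) (i : κ) :
    |shiftedCol u b x i| ≤ b * lam := by
  have hb : 0 ≤ b := (abs_nonneg _).trans (hu i)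
  have hx : ((x i : ℕ) : ℤ) + 1 ≤ lam := by exact_mod_cast (x i).isLt
  calc |shiftedCol u b x i| ≤ |u i| + |b * (x i : ℕ)| := abs_add_le _ _
    _ ≤ b + b * (x i : ℕ) := by
      rw [abs_of_nonneg (by positivity : 0 ≤ b * ((x i : ℕ) : ℤ))]
      gcongr
      exact hu i
    _ = b * ((x i : ℕ) + 1) := by ring
    _ ≤ b * lam := by gcongr

theorem abs_perturb_le (hM : ∀ i j, |M i j| ≤ a j) (R : Matrix κ ι (Fin lam)) (i : κ) (j : ι) :
    |perturb M a R i j| ≤ a j * lam := by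
  rw [← col_apply (perturb M a R) j i, col_perturb]
  exact abs_shiftedCol_le (fun i => hM i j) _ i

theorem natAbs_det_submatrix_perturb_le {β : Type*} [Fintype β] [DecidableEq β]
    (ha : ∀ j, 0 < a j) (hM : ∀ i j, |M i j| ≤ a j) (hpos : 0 < lam)
    (hlam : Fintype.card ι ≤ lam) (hprod : ∏ j, a j ≤ lam ^ Fintype.card ι)
    (R : Matrix κ ι (Fin lam)) (f : β → κ) {g : β → ι} (hg : Function.Injective g) :
    ((perturb M a R).submatrix f g).det.natAbs ≤ lam ^ (3 * Fintype.card ι) := by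
  zify
  exact abs_det_submatrix_le ha (abs_perturb_le hM R) hpos hlam hprod f hg

end Perturbation

section ExposeColumns

variable {κ ι : Type*} [Fintype ι] [LinearOrder ι] {lam : ℕ} {M : Matrix κ ι ℤ} {a : ι → ℤ}

theorem submatrix_Ioi_perturb_congr {R T : Matrix κ ι (Fin lam)} {j : ι}
    (h : ∀ i k, k ≠ j → R i k = T i k) :
    (perturb M a R).submatrix id ((↑) : Set.Ioi j → ι) =
      (perturb M a T).submatrix id ((↑) : Set.Ioi j → ι) := by
  ext i k
  simp [perturb, h i k k.2.ne']

theorem borderedMinor_submatrix_col (B : Matrix κ ι ℤ) (j : ι) (f : Set.Ioi j → κ) (r : κ) :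
    borderedMinor (B.submatrix id ((↑) : Set.Ioi j → ι)) (B.col j) f r =
      (B.submatrix (Sum.elim f fun _ => r) (Sum.elim (↑) fun _ : Unit => j)).det := by
  rw [borderedMinor]
  congr 1
  ext i (k | k) <;> rfl

variable [Fintype κ] [DecidableEq κ]

open scoped Classical in
theorem card_exists_isDependencePrimeAt_le_mul {j : ι} {X : ℕ}
    (hX : ∀ R : Matrix κ ι (Fin lam), #{x : κ → Fin lam | ∃ p, IsDependencePrime
      ((perturb M a R).submatrix id ((↑) : Set.Ioi j → ι)) (a j) (shiftedCol (M.col j) (a j) x) p}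
        ≤ X) :
    #{R : Matrix κ ι (Fin lam) | ∃ p, IsDependencePrimeAt (perturb M a R) a j p} ≤
      X * (lam ^ Fintype.card κ) ^ (Fintype.card ι - 1) := by
  set s : Finset (Matrix κ ι (Fin lam)) := {R | ∃ p, IsDependencePrimeAt (perturb M a R) a j p}
  let others (R : Matrix κ ι (Fin lam)) (k : {k // k ≠ j}) : κ → Fin lam := R.col k
  have hfiber (b : {k // k ≠ j} → κ → Fin lam) : #{R ∈ s | others R = b} ≤ X := by
    obtain hempty | ⟨R₀, hR₀⟩ := {R ∈ s | others R = b}.eq_empty_or_nonempty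
    · simp [hempty]
    obtain ⟨-, rfl⟩ := mem_filter.1 hR₀
    have hothers {R T : Matrix κ ι (Fin lam)} (h : others R = others T) (i : κ) (k : ι)
        (hk : k ≠ j) : R i k = T i k := congrFun₂ h ⟨k, hk⟩ i
    refine (card_le_card_of_injOn (fun R => R.col j) (fun R hR => ?_)
      fun R hR T hT hRT => ?_).trans (hX R₀)
    · obtain ⟨hRs, hRR₀⟩ := mem_filter.1 hR
      obtain ⟨p, hp⟩ := (mem_filter_univ R).1 hRs
      rw [IsDependencePrimeAt, submatrix_Ioi_perturb_congr (hothers hRR₀), col_perturb] at hp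
      exact (mem_filter_univ _).2 ⟨p, hp⟩
    · have hRT' := hothers ((mem_filter.1 hR).2.trans (mem_filter.1 hT).2.symm)
      ext1 i k
      obtain rfl | hk := eq_or_ne k j
      · exact congrFun hRT i
      · exact hRT' i k hk
  calc #s ≤ X * #(univ : Finset ({k // k ≠ j} → κ → Fin lam)) :=
        card_le_mul_card_image_of_maps_to (f := others) (fun _ _ => mem_univ _) X
          fun b _ => hfiber b
    _ = X * (lam ^ Fintype.card κ) ^ (Fintype.card ι - 1) := by simp

open scoped Classical in
theorem card_exists_isDependencePrimeAt_le (ha : ∀ j, 0 < a j) (ha2 : ∀ j, 2 ∣ a j)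
    (hM : ∀ i j, |M i j| ≤ a j) (hlam1 : 1 < lam) (hlam : Fintype.card ι ≤ lam)
    (hprod : ∏ j, a j ≤ lam ^ Fintype.card ι) {j : ι}
    (hcard : Nat.card (Set.Ioi j) < Fintype.card κ) :
    #{R : Matrix κ ι (Fin lam) | ∃ p, IsDependencePrimeAt (perturb M a R) a j p} ≤
      columnBound lam (Fintype.card κ) (Nat.card (Set.Ioi j)) (3 * Fintype.card ι) *
        (lam ^ Fintype.card κ) ^ (Fintype.card ι - 1) := by
  rw [Nat.card_eq_fintype_card] at hcard ⊢
  refine card_exists_isDependencePrimeAt_le_mul fun R => ?_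
  have hpos := zero_lt_one.trans hlam1
  refine card_exists_isDependencePrime_le (ha j).ne' (ha2 j) hcard hlam1
    (fun f => natAbs_det_submatrix_perturb_le ha hM hpos hlam hprod R f Subtype.val_injective)
    fun f r x => ?_
  let T : Matrix κ ι (Fin lam) := R.updateCol j x
  have hcol : (perturb M a T).col j = shiftedCol (M.col j) (a j) x := by
    rw [col_perturb]
    congr 1
    ext i
    simp [T]
  rw [submatrix_Ioi_perturb_congr (T := T) fun i k hk => (updateCol_ne hk).symm, ← hcol,
    borderedMinor_submatrix_col]
  exact natAbs_det_submatrix_perturb_le ha hM hpos hlam hprod T _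
    (Subtype.val_injective.sumElim (Function.injective_of_subsingleton _) fun k _ => k.2.ne')

end ExposeColumns

section Numerics

theorem sum_pow_add_le {q : ℝ} (h0 : 0 ≤ q) (h1 : q < 1) (m c : ℕ) :
    ∑ i ∈ range m, q ^ (i + c) ≤ q ^ c / (1 - q) := by
  have := geom_sum_Ico_le_of_lt_one (m := c) (n := m + c) h0 h1
  rwa [sum_Ico_eq_sum_range, Nat.add_sub_cancel, sum_congr rfl fun i _ => by rw [add_comm c i]]
    at this

theorem sum_one_div_two_mul_add_three_sq_le (m : ℕ) :
    ∑ k ∈ range m, 1 / (2 * k + 3 : ℝ) ^ 2 ≤ 1 / 4 := by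
  have htelescope (k : ℕ) : 1 / (2 * k + 3 : ℝ) ^ 2 ≤
      1 / 4 * (1 / ((k : ℝ) + 1) - 1 / (((k + 1 : ℕ) : ℝ) + 1)) := by
    push_cast
    rw [div_sub_div _ _ (by positivity) (by positivity), div_mul_div_comm,
      div_le_div_iff₀ (by positivity) (by positivity)]
    nlinarith
  calc ∑ k ∈ range m, 1 / (2 * k + 3 : ℝ) ^ 2
      ≤ ∑ k ∈ range m, 1 / 4 * (1 / ((k : ℝ) + 1) - 1 / (((k + 1 : ℕ) : ℝ) + 1)) :=
        sum_le_sum fun k _ => htelescope k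
    _ = 1 / 4 * (1 - 1 / ((m : ℝ) + 1)) := by
      rw [← mul_sum, sum_range_sub' fun k : ℕ => 1 / ((k : ℝ) + 1)]
      simp
    _ ≤ 1 / 4 := by
      have : 0 ≤ 1 / ((m : ℝ) + 1) := by positivity
      linarith

theorem ceilDiv_div_le (lam p : ℕ) : ((lam ⌈/⌉ p : ℕ) : ℝ) / lam ≤ 1 / p + 1 / lam := by
  obtain rfl | hlam := lam.eq_zero_or_pos
  · simp
  obtain rfl | hp := p.eq_zero_or_pos
  · simp
  calc ((lam ⌈/⌉ p : ℕ) : ℝ) / lam ≤ (((lam + p : ℕ) : ℝ) / p) / lam := by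
        rw [Nat.ceilDiv_eq_add_pred_div]
        gcongr
        exact Nat.cast_div_le.trans (by gcongr; omega)
    _ = 1 / p + 1 / lam := by
      push_cast
      field_simp

theorem sum_ceilDiv_div_pow_le {lam : ℕ} (hlam : 210 ≤ lam) (m k : ℕ) :
    ∑ i ∈ range m, (((lam ⌈/⌉ (2 * k + 3) : ℕ) : ℝ) / lam) ^ (i + 2) ≤
      210 / 139 * (11 / 10 * (1 / (2 * k + 3 : ℝ) ^ 2) + 11 * (1 / (lam : ℝ)) ^ 2) := by
  have hinv : 1 / (lam : ℝ) ≤ 1 / 210 := by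
    gcongr
    exact_mod_cast hlam
  set q : ℝ := ((lam ⌈/⌉ (2 * k + 3) : ℕ) : ℝ) / lam
  have hq0 : 0 ≤ q := by positivity
  have hq : q ≤ 1 / (2 * k + 3 : ℝ) + 1 / lam := by
    exact_mod_cast ceilDiv_div_le lam (2 * k + 3)
  have hk : 1 / (2 * k + 3 : ℝ) ≤ 1 / 3 := by
    gcongr
    linarith [k.cast_nonneg (α := ℝ)]
  calc ∑ i ∈ range m, q ^ (i + 2) ≤ q ^ 2 / (1 - q) := sum_pow_add_le hq0 (by linarith) m 2
    _ ≤ q ^ 2 / (139 / 210) := by gcongr; linarith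
    _ = 210 / 139 * q ^ 2 := by ring
    _ ≤ 210 / 139 * (1 / (2 * k + 3 : ℝ) + 1 / lam) ^ 2 := by gcongr
    _ ≤ 210 / 139 * (11 / 10 * (1 / (2 * k + 3 : ℝ)) ^ 2 + 11 * (1 / (lam : ℝ)) ^ 2) := by
      gcongr
      -- `(u + v)² ≤ 11/10 u² + 11 v²` by AM-GM, weighted so that the main term barely grows
      linarith [sq_nonneg (1 / (2 * k + 3 : ℝ) - 10 * (1 / lam))]
    _ = _ := by rw [div_pow 1 (2 * k + 3 : ℝ), one_pow]

theorem sum_sum_ceilDiv_div_pow_le {lam : ℕ} (hlam : 210 ≤ lam) (m : ℕ) :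
    ∑ i ∈ range m, ∑ k ∈ range (lam / 2), (((lam ⌈/⌉ (2 * k + 3) : ℕ) : ℝ) / lam) ^ (i + 2) ≤
      23 / 50 := by
  have hlam' : (210 : ℝ) ≤ lam := by exact_mod_cast hlam
  have hinv : 1 / (lam : ℝ) ≤ 1 / 210 := by gcongr
  have htail : ((lam / 2 : ℕ) : ℝ) * (1 / (lam : ℝ)) ^ 2 ≤ 1 / 420 := by
    calc ((lam / 2 : ℕ) : ℝ) * (1 / (lam : ℝ)) ^ 2 ≤ ((lam : ℝ) / 2) * (1 / (lam : ℝ)) ^ 2 := by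
          gcongr
          exact Nat.cast_div_le
      _ = 1 / 2 * (1 / (lam : ℝ)) := by
        have : (lam : ℝ) ≠ 0 := by positivity
        field_simp
      _ ≤ 1 / 420 := by linarith
  calc _ = ∑ k ∈ range (lam / 2),
        ∑ i ∈ range m, (((lam ⌈/⌉ (2 * k + 3) : ℕ) : ℝ) / lam) ^ (i + 2) := sum_comm
    _ ≤ ∑ k ∈ range (lam / 2),
        210 / 139 * (11 / 10 * (1 / (2 * k + 3 : ℝ) ^ 2) + 11 * (1 / (lam : ℝ)) ^ 2) :=
      sum_le_sum fun k _ => sum_ceilDiv_div_pow_le hlam m k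
    _ = 210 / 139 * (11 / 10 * ∑ k ∈ range (lam / 2), 1 / (2 * k + 3 : ℝ) ^ 2 +
        11 * ((lam / 2 : ℕ) * (1 / (lam : ℝ)) ^ 2)) := by
      simp only [← mul_sum, sum_add_distrib, sum_const, card_range, nsmul_eq_mul]
    _ ≤ 210 / 139 * (11 / 10 * (1 / 4) + 11 * (1 / 420)) := by
      gcongr
      exact sum_one_div_two_mul_add_three_sq_le _
    _ ≤ 23 / 50 := by norm_num

theorem columnBound_eq_pow_mul {lam : ℕ} (hlam : 0 < lam) {m i : ℕ} (hi : i < m) (K : ℕ) :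
    (columnBound lam (m + 1) (m - 1 - i) K : ℝ) = (lam : ℝ) ^ (m + 1) *
      (∑ k ∈ range (lam / 2), (((lam ⌈/⌉ (2 * k + 3) : ℕ) : ℝ) / lam) ^ (i + 2) + 1 / lam +
        K * (1 / lam : ℝ) ^ (i + 1) + K * (1 / lam : ℝ) ^ (i + 2)) := by
  obtain ⟨d, rfl⟩ := Nat.exists_eq_add_of_lt hi
  have hlam' : (lam : ℝ) ≠ 0 := by positivity
  have hd : i + d + 1 - 1 - i = d := by omega
  have hc : i + d + 1 + 1 - d = i + 2 := by omega
  have hpow : (lam : ℝ) ^ (i + d + 1 + 1) = lam ^ d * lam ^ (i + 2) := by ring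
  rw [columnBound, hd, hc, hpow]
  push_cast
  simp only [mul_add, mul_sum, div_pow, one_pow]
  congr 1
  · congr 1
    · congr 1
      · refine sum_congr rfl fun k _ => ?_
        field_simp
      · field_simp
        ring
    · field_simp
      ring
  · field_simp

theorem sum_columnBound_le {m lam : ℕ} (hm : 0 < m) (hlam : 105 * (m + 1) ≤ lam) :
    ∑ i ∈ range m, (columnBound lam (m + 1) (m - 1 - i) (3 * (m + 1)) : ℝ) ≤
      lam ^ (m + 1) * (499 / 1000) := by
  have hlam210 : 210 ≤ lam := by omega
  have hpos : 0 < lam := by omega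
  have hx210 : 1 / (lam : ℝ) ≤ 1 / 210 := by
    gcongr
    exact_mod_cast hlam210
  have hx105 : (m + 1 : ℝ) * (1 / lam) ≤ 1 / 105 := by
    rw [mul_one_div, div_le_div_iff₀ (by positivity) (by positivity)]
    exact_mod_cast (by omega : (m + 1) * 105 ≤ 1 * lam)
  set x : ℝ := 1 / lam
  have hx0 : 0 ≤ x := by positivity
  have hgeom (c : ℕ) : ∑ i ∈ range m, x ^ (i + c) ≤ 210 / 209 * x ^ c :=
    calc ∑ i ∈ range m, x ^ (i + c) ≤ x ^ c / (1 - x) := sum_pow_add_le hx0 (by linarith) m c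
      _ ≤ x ^ c / (209 / 210) := by gcongr; linarith
      _ = 210 / 209 * x ^ c := by ring
  calc _ = (lam : ℝ) ^ (m + 1) * (∑ i ∈ range m, ∑ k ∈ range (lam / 2),
          (((lam ⌈/⌉ (2 * k + 3) : ℕ) : ℝ) / lam) ^ (i + 2) + m * x +
        3 * (m + 1) * ∑ i ∈ range m, x ^ (i + 1) + 3 * (m + 1) * ∑ i ∈ range m, x ^ (i + 2)) := by
        rw [sum_congr rfl fun i hi => columnBound_eq_pow_mul hpos (mem_range.1 hi) _, ← mul_sum]
        simp only [sum_add_distrib, ← mul_sum, sum_const, card_range, nsmul_eq_mul]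
        push_cast
        rfl
    _ ≤ (lam : ℝ) ^ (m + 1) * (23 / 50 + (m + 1) * x + 3 * (m + 1) * (210 / 209 * x ^ 1) +
        3 * (m + 1) * (210 / 209 * x ^ 2)) := by
      gcongr
      · exact sum_sum_ceilDiv_div_pow_le hlam210 m
      · linarith
      · exact hgeom 1
      · exact hgeom 2
    _ = (lam : ℝ) ^ (m + 1) * (23 / 50 + ((m + 1) * x) * (1 + 630 / 209 + 630 / 209 * x)) := by
      ring
    _ ≤ (lam : ℝ) ^ (m + 1) * (23 / 50 + 1 / 105 * (1 + 630 / 209 + 630 / 209 * (1 / 210))) := by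
      gcongr
    _ ≤ (lam : ℝ) ^ (m + 1) * (499 / 1000) := by
      gcongr
      norm_num

theorem two_mul_sum_columnBound_lt {m lam : ℕ} (hlam : 105 * (m + 1) ≤ lam) :
    2 * ∑ i ∈ range m, columnBound lam (m + 1) (m - 1 - i) (3 * (m + 1)) < lam ^ (m + 1) := by
  have hpos : 0 < (lam : ℝ) ^ (m + 1) := pow_pos (by norm_cast; omega) _
  have hlt : (2 : ℝ) * ∑ i ∈ range m, (columnBound lam (m + 1) (m - 1 - i) (3 * (m + 1)) : ℝ) <
      lam ^ (m + 1) := by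
    obtain rfl | hm := m.eq_zero_or_pos
    · simpa using hpos
    · linarith [sum_columnBound_le hm hlam]
  exact_mod_cast hlt

end Numerics

section LastColumns

variable {κ : Type*} [Fintype κ] {m lam : ℕ} {a : Fin (m + 1) → ℤ}

theorem exists_isDependencePrimeAt_succ {B : Matrix κ (Fin (m + 1)) ℤ}
    {W : Matrix (Fin (m + 1)) κ ℤ} {p : ℕ} (hp : p.Prime)
    (hW : ∀ i j, a j ∣ (W * B) i j - (1 : Matrix (Fin (m + 1)) (Fin (m + 1)) ℤ) i j)
    (ha : ∀ i j, i ≤ j → a i ∣ a j)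
    (h : ¬ LinearIndependent (ZMod p) fun (j : Fin m) (i : κ) => ((B i j.succ : ℤ) : ZMod p)) :
    ∃ j : Fin m, IsDependencePrimeAt B a j.succ p := by
  contrapose! h
  have hindep := linearIndepOn_col_of_forall_not_isDependencePrimeAt (s := Ioi 0) hp hW ha
    (coe_Ioi (0 : Fin (m + 1)) ▸ isUpperSet_Ioi 0) fun j hj => by
      obtain ⟨i, rfl⟩ := Fin.exists_succ_eq.2 (mem_Ioi.1 hj).ne'
      exact h i
  exact hindep.comp (fun j : Fin m => ⟨j.succ, by simp⟩) fun i j hij => by simpa using hij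

open scoped Classical in
theorem two_mul_card_not_linearIndependent_perturb_lt {M W : Matrix (Fin (m + 1)) (Fin (m + 1)) ℤ}
    (ha : ∀ j, 0 < a j) (ha2 : ∀ j, 2 ∣ a j) (hdvd : ∀ i j, i ≤ j → a i ∣ a j)
    (hW : ∀ i j, a j ∣ (W * M) i j - (1 : Matrix (Fin (m + 1)) (Fin (m + 1)) ℤ) i j)
    (hM : ∀ i j, |M i j| ≤ a j) (hlam : 105 * (m + 1) ≤ lam)
    (hprod : ∏ j, a j ≤ lam ^ (m + 1)) :
    2 * #{R : Matrix (Fin (m + 1)) (Fin (m + 1)) (Fin lam) | ∃ p : ℕ, p.Prime ∧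
        ¬ LinearIndependent (ZMod p) fun (j : Fin m) (i : Fin (m + 1)) =>
          ((perturb M a R i j.succ : ℤ) : ZMod p)} < lam ^ ((m + 1) * (m + 1)) := by
  let bad (j : Fin m) : Finset (Matrix (Fin (m + 1)) (Fin (m + 1)) (Fin lam)) :=
    {R | ∃ p, IsDependencePrimeAt (perturb M a R) a j.succ p}
  have hbad (j : Fin m) : #(bad j) ≤
      columnBound lam (m + 1) (m - 1 - j) (3 * (m + 1)) * (lam ^ (m + 1)) ^ m := by
    have hIoi : Nat.card (Set.Ioi j.succ) = m - 1 - j := by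
      simp [Nat.sub_sub, add_comm]
    have hj := card_exists_isDependencePrimeAt_le (j := j.succ) ha ha2 hM (by omega : 1 < lam)
      (by rw [Fintype.card_fin]; omega) (by simpa using hprod)
      (by rw [hIoi, Fintype.card_fin]; omega)
    simpa only [hIoi, Fintype.card_fin, Nat.add_sub_cancel] using hj
  calc 2 * _ ≤ 2 * #(univ.biUnion bad) := by
        gcongr
        intro R hR
        obtain ⟨p, hp, hdep⟩ := (mem_filter_univ R).1 hR
        obtain ⟨j, hj⟩ := exists_isDependencePrimeAt_succ hp (dvd_mul_perturb_sub hW R) hdvd hdep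
        exact mem_biUnion.2 ⟨j, mem_univ j, (mem_filter_univ R).2 ⟨p, hj⟩⟩
    _ ≤ 2 * ∑ j : Fin m,
        columnBound lam (m + 1) (m - 1 - j) (3 * (m + 1)) * (lam ^ (m + 1)) ^ m := by
      gcongr
      exact card_biUnion_le.trans (sum_le_sum fun j _ => hbad j)
    _ = (2 * ∑ i ∈ range m, columnBound lam (m + 1) (m - 1 - i) (3 * (m + 1))) *
        (lam ^ (m + 1)) ^ m := by
      rw [← sum_mul, mul_assoc, Fin.sum_univ_eq_sum_range
        fun i => columnBound lam (m + 1) (m - 1 - i) (3 * (m + 1))]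
    _ < lam ^ (m + 1) * (lam ^ (m + 1)) ^ m := by
      gcongr
      · exact pow_pos (pow_pos (by omega) _) _
      · exact two_mul_sum_columnBound_lt hlam
    _ = lam ^ ((m + 1) * (m + 1)) := by ring

end LastColumns

theorem perturbed_massager_bad_count_lt_half_general {n : ℕ} (S M W : Matrix (Fin n) (Fin n) ℤ)
    (hS : S.IsDiag) (hpos : ∀ i, 0 < S i i) (hdvd : ∀ i j, i ≤ j → S i i ∣ S j j)
    (hW : ColMod ((2 : ℤ) • S) (W * M) 1) (hM : ∀ i j, |M i j| ≤ 2 * S j j)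
    (lam : ℕ) (hlam : 105 * n ≤ lam) (hdet : ((2 : ℤ) • S).det ≤ (lam : ℤ) ^ n) :
    2 * Nat.card {R : Matrix (Fin n) (Fin n) ℤ //
        (∀ i j, 0 ≤ R i j ∧ R i j < (lam : ℤ)) ∧
        ∃ p : ℕ, p.Prime ∧ ¬ LinearIndependent (ZMod p)
          (fun j : Fin (n - 1) => fun i : Fin n =>
            (((M + (2 : ℤ) • (R * S)) i
              ⟨j.val + 1, by have := j.isLt; omega⟩ : ℤ) : ZMod p))} <
      lam ^ (n * n) := by
  classical
  have h2S : (2 : ℤ) • S = diagonal fun j => 2 * S j j := (hS.smul 2).diagonal_diag.symm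
  simp only [← Matrix.mul_smul, h2S]
  rw [natCard_box_eq_card_filter]
  obtain _ | m := n
  · have : IsEmpty (Fin (0 - 1)) := Fin.isEmpty
    simp [linearIndependent_empty_type]
  refine two_mul_card_not_linearIndependent_perturb_lt (fun j => by simpa using hpos j)
    (fun j => dvd_mul_right 2 _) (fun i j hij => mul_dvd_mul_left 2 (hdvd i j hij)) hW hM hlam ?_
  rwa [h2S, det_diagonal] at hdet

/-- Main probabilistic lemma: for a reduced Smith massager `M` for `2A` and
`λ = 105·max(n, ⌈det(2S)^{1/n}⌉)`, fewer than half of the matrices `R` with entries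
in `{0, …, λ-1}` are such that some prime `p` makes the last `n-1` columns of
`M + 2RS` linearly dependent over `ℤ/(p)`. -/
theorem perturbed_massager_bad_count_lt_half {n : ℕ}
    (A S M : Matrix (Fin n) (Fin n) ℤ) (hA : A.det ≠ 0)
    (hS : IsSmithForm A S)
    (hM : IsSmithMassager ((2 : ℤ) • A) ((2 : ℤ) • S) M)
    (hMred : ∀ i j, 0 ≤ M i j ∧ M i j < 2 * S j j)
    (t : ℕ) (ht : IsLeast {t : ℕ | 0 < t ∧ ((2 : ℤ) • S).det ≤ (t : ℤ) ^ n} t)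
    (lam : ℕ) (hlam : lam = 105 * max n t) :
    2 * Nat.card {R : Matrix (Fin n) (Fin n) ℤ //
        (∀ i j, 0 ≤ R i j ∧ R i j < (lam : ℤ)) ∧
        ∃ p : ℕ, p.Prime ∧ ¬ LinearIndependent (ZMod p)
          (fun j : Fin (n - 1) => fun i : Fin n =>
            (((M + (2 : ℤ) • (R * S)) i
              ⟨j.val + 1, by have := j.isLt; omega⟩ : ℤ) : ZMod p))} <
      lam ^ (n * n) := by
  obtain ⟨-, W, hW⟩ := hM
  exact perturbed_massager_bad_count_lt_half_general S M W (fun _ _ => hS.1 _ _) hS.2.1 hS.2.2.1 hW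
    (fun i j => by grind) lam (by omega) (ht.1.2.trans (by gcongr; omega))
end

section
/- Let A ∈ ℤ^{n×n} be nonsingular with Smith form S = diag(s_1,…,s_n). Let M ∈ ℤ^{n×n} satisfy 0 ≤ M_{ij} < 2s_j for all i, j, and let R ∈ ℤ^{n×n} satisfy 0 ≤ R_{ij} ≤ λ−1 for all i, j, where λ is a positive integer with λ ≥ n and λ^n ≥ det(2S). Set B = M + 2RS. Then every minor of B (the determinant of any square submatrix of B obtained by selecting equally many rows and columns) has absolute value at most λ^{5n/2}; equivalently, the square of any minor of B is at most λ^{5n}. -/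
open Matrix

/-!
By Hadamard's inequality the square of a determinant of order `m` whose `j`-th column has entries
of absolute value at most `b j` is at most `m ^ m * (∏ j, b j) ^ 2`. The entries in column `j` of
`B = M + 2RS` are at most `2 * s_j + 2 * (λ - 1) * s_j = λ * (2 * s_j)` in absolute value. All these
bounds are at least `1`, so for a minor the product over the selected columns is at most the product
over all columns, which is `λ ^ n * det (2S) ≤ λ ^ (2 * n)`. The square of a minor is therefore at
most `n ^ n * (λ ^ (2 * n)) ^ 2 ≤ λ ^ (5 * n)`.
-/

open Function

section Hadamard

variable {𝕜 ι : Type*} [RCLike 𝕜] [Fintype ι] [DecidableEq ι]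

theorem norm_det_orthonormalBasis_fin_le {E : Type*} [NormedAddCommGroup E]
    [InnerProductSpace 𝕜 E] {n : ℕ} (b : OrthonormalBasis (Fin n) 𝕜 E) (v : Fin n → E) :
    ‖b.toBasis.det v‖ ≤ ∏ i, ‖v i‖ := by
  have : FiniteDimensional 𝕜 E := b.toBasis.finiteDimensional_of_finite
  let g := InnerProductSpace.gramSchmidtOrthonormalBasis
    (Module.finrank_eq_card_basis b.toBasis) v
  calc
    ‖b.toBasis.det v‖ = ‖b.toBasis.det g‖ * ‖g.toBasis.det v‖ := by
      have h := DFunLike.congr_fun (b.toBasis.det.eq_smul_basis_det g.toBasis) v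
      rw [h, g.coe_toBasis, AlternatingMap.smul_apply, smul_eq_mul, norm_mul]
    _ = ∏ i, ‖inner 𝕜 (g i) (v i)‖ := by
      rw [b.det_to_matrix_orthonormalBasis g, one_mul,
        InnerProductSpace.gramSchmidtOrthonormalBasis_det, norm_prod]
    _ ≤ ∏ i, ‖v i‖ := by
      gcongr with i
      simpa using norm_inner_le_norm (𝕜 := 𝕜) (g i) (v i)

theorem norm_det_orthonormalBasis_le {E : Type*} [NormedAddCommGroup E] [InnerProductSpace 𝕜 E]
    (b : OrthonormalBasis ι 𝕜 E) (v : ι → E) : ‖b.toBasis.det v‖ ≤ ∏ i, ‖v i‖ := by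
  let e := Fintype.equivFin ι
  have h := norm_det_orthonormalBasis_fin_le (b.reindex e) (v ∘ e.symm)
  rwa [b.reindex_toBasis, Module.Basis.det_reindex, comp_assoc, e.symm_comp_self, comp_id,
    comp_def, e.symm.prod_comp (fun i => ‖v i‖)] at h

theorem norm_det_le_prod_norm_col (X : Matrix ι ι 𝕜) :
    ‖X.det‖ ≤ ∏ j, ‖WithLp.toLp 2 (X.col j)‖ := by
  have h := norm_det_orthonormalBasis_le (EuclideanSpace.basisFun ι 𝕜)
    fun j => WithLp.toLp 2 (X.col j)
  rwa [Module.Basis.det_apply] at h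

theorem sq_det_le_prod_sum_sq (X : Matrix ι ι ℤ) : X.det ^ 2 ≤ ∏ j, ∑ i, X i j ^ 2 := by
  have h := pow_le_pow_left₀ (norm_nonneg _)
    (norm_det_le_prod_norm_col (X.map (Int.cast : ℤ → ℝ))) 2
  simp only [← Finset.prod_pow, EuclideanSpace.real_norm_sq_eq, Matrix.col_apply,
    Matrix.map_apply, ← Int.cast_det, Real.norm_eq_abs, sq_abs] at h
  exact_mod_cast h

theorem sq_det_le_card_pow_mul_sq_prod {X : Matrix ι ι ℤ} {b : ι → ℤ}
    (hX : ∀ i j, |X i j| ≤ b j) :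
    X.det ^ 2 ≤ (Fintype.card ι : ℤ) ^ Fintype.card ι * (∏ j, b j) ^ 2 :=
  calc
    X.det ^ 2 ≤ ∏ j, ∑ i, X i j ^ 2 := sq_det_le_prod_sum_sq X
    _ ≤ ∏ j, ∑ _i : ι, b j ^ 2 := by
      gcongr ∏ j, ∑ i, ?_ with j _ i
      exact sq_le_sq.mpr ((hX i j).trans (le_abs_self _))
    _ = (Fintype.card ι : ℤ) ^ Fintype.card ι * (∏ j, b j) ^ 2 := by
      simp [Finset.prod_mul_distrib, Finset.prod_pow]

end Hadamard

section Minors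

variable {ι κ ρ : Type*} [Fintype ι] [Fintype κ]

theorem prod_comp_le_prod_of_injective {R : Type*} [CommSemiring R] [PartialOrder R]
    [IsOrderedRing R] {b : ι → R} (hb : ∀ i, 1 ≤ b i) {c : κ → ι} (hc : Injective c) :
    ∏ k, b (c k) ≤ ∏ i, b i :=
  calc
    ∏ k, b (c k) = ∏ i ∈ Finset.univ.map ⟨c, hc⟩, b i := by simp
    _ ≤ ∏ i, b i := Finset.prod_le_prod_of_subset_of_one_le (Finset.subset_univ _)
      (fun i _ => zero_le_one.trans (hb i)) fun i _ _ => hb i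

theorem pow_self_le_pow_self {m n : ℕ} (h : m ≤ n) : m ^ m ≤ n ^ n := by
  rcases m.eq_zero_or_pos with rfl | hm
  · exact Nat.pow_self_pos
  · exact (Nat.pow_le_pow_left h m).trans (Nat.pow_le_pow_right (hm.trans_le h) h)

theorem sq_det_submatrix_le_card_pow_mul_sq_prod [DecidableEq κ] {X : Matrix ρ ι ℤ}
    {b : ι → ℤ} (hb : ∀ j, 1 ≤ b j) (hX : ∀ i j, |X i j| ≤ b j) (r : κ → ρ) {c : κ → ι}
    (hc : Injective c) :
    (X.submatrix r c).det ^ 2 ≤ (Fintype.card ι : ℤ) ^ Fintype.card ι * (∏ j, b j) ^ 2 := by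
  have hcard : (Fintype.card κ : ℤ) ^ Fintype.card κ ≤ (Fintype.card ι : ℤ) ^ Fintype.card ι :=
    mod_cast pow_self_le_pow_self (Fintype.card_le_of_injective c hc)
  calc
    (X.submatrix r c).det ^ 2 ≤ (Fintype.card κ : ℤ) ^ Fintype.card κ * (∏ k, b (c k)) ^ 2 :=
      sq_det_le_card_pow_mul_sq_prod fun i k => hX (r i) (c k)
    _ ≤ (Fintype.card ι : ℤ) ^ Fintype.card ι * (∏ j, b j) ^ 2 := by
      gcongr
      · exact Finset.prod_nonneg fun k _ => zero_le_one.trans (hb (c k))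
      · exact prod_comp_le_prod_of_injective hb hc

end Minors

section Diagonal

variable {ι ρ α : Type*} [Fintype ι] {S : Matrix ι ι α}

theorem mul_apply_of_isDiag [NonUnitalNonAssocSemiring α] (hS : S.IsDiag) (R : Matrix ρ ι α)
    (i : ρ) (j : ι) : (R * S) i j = R i j * S j j := by
  classical
  rw [← hS.diagonal_diag, mul_diagonal, diagonal_apply_eq]

theorem det_smul_of_isDiag [DecidableEq ι] [CommRing α] (hS : S.IsDiag) (a : α) :
    (a • S).det = ∏ j, a * S j j := by
  rw [← (hS.smul a).diagonal_diag, det_diagonal]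
  simp only [Matrix.diag_apply, Matrix.smul_apply, smul_eq_mul]

theorem abs_add_two_smul_mul_apply_le [CommRing α] [LinearOrder α] [IsOrderedRing α]
    (hS : S.IsDiag) {M R : Matrix ρ ι α} {lam : α} {i : ρ} {j : ι} (hM : |M i j| ≤ 2 * S j j)
    (hR : |R i j| ≤ lam - 1) :
    |(M + (2 : α) • (R * S)) i j| ≤ lam * (2 * S j j) :=
  have hSj : 0 ≤ 2 * S j j := (abs_nonneg _).trans hM
  calc
    |(M + (2 : α) • (R * S)) i j| = |M i j + R i j * (2 * S j j)| := by
      rw [Matrix.add_apply, Matrix.smul_apply, mul_apply_of_isDiag hS, smul_eq_mul, mul_left_comm]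
    _ ≤ |M i j| + |R i j| * (2 * S j j) := by
      simpa only [abs_mul (R i j), abs_of_nonneg hSj] using
        abs_add_le (M i j) (R i j * (2 * S j j))
    _ ≤ 2 * S j j + (lam - 1) * (2 * S j j) := by gcongr
    _ = lam * (2 * S j j) := by ring

end Diagonal

theorem minor_sq_le_of_perturbed_massager_general {ι κ ρ : Type*} [Fintype ι] [DecidableEq ι]
    [Fintype κ] [DecidableEq κ] {S : Matrix ι ι ℤ} {M R : Matrix ρ ι ℤ} {lam : ℤ}
    (hS : S.IsDiag) (hSpos : ∀ j, 0 < S j j) (hM : ∀ i j, |M i j| ≤ 2 * S j j)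
    (hlam_card : Fintype.card ι ≤ lam) (hlam_det : ((2 : ℤ) • S).det ≤ lam ^ Fintype.card ι)
    (hR : ∀ i j, |R i j| ≤ lam - 1) (r : κ → ρ) {c : κ → ι} (hc : Injective c) :
    ((M + (2 : ℤ) • (R * S)).submatrix r c).det ^ 2 ≤ lam ^ (5 * Fintype.card ι) := by
  have hb : ∀ j, 1 ≤ lam * (2 * S j j) := fun j => by
    have : Nonempty ι := ⟨j⟩
    have hlam_pos : 0 < lam := (Nat.cast_pos.mpr Fintype.card_pos).trans_le hlam_card
    have hSj := hSpos j
    exact Order.one_le_iff_pos.mpr (by positivity)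
  have hdet : 0 ≤ ((2 : ℤ) • S).det := by
    rw [det_smul_of_isDiag hS]
    exact Finset.prod_nonneg fun j _ => mul_nonneg zero_le_two (hSpos j).le
  have hlam : 0 ≤ lam := (Nat.cast_nonneg _).trans hlam_card
  calc
    _ ≤ (Fintype.card ι : ℤ) ^ Fintype.card ι * (∏ j, lam * (2 * S j j)) ^ 2 :=
      sq_det_submatrix_le_card_pow_mul_sq_prod hb
        (fun i j => abs_add_two_smul_mul_apply_le hS (hM i j) (hR i j)) r hc
    _ = (Fintype.card ι : ℤ) ^ Fintype.card ι *
        (lam ^ Fintype.card ι * ((2 : ℤ) • S).det) ^ 2 := by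
      rw [det_smul_of_isDiag hS, Finset.prod_mul_distrib, Finset.prod_const, Finset.card_univ]
    _ ≤ lam ^ Fintype.card ι * (lam ^ Fintype.card ι * lam ^ Fintype.card ι) ^ 2 := by gcongr
    _ = lam ^ (5 * Fintype.card ι) := by ring

/-- Every minor of `B = M + 2RS` is bounded in magnitude by `λ^{5n/2}`;
equivalently, the square of any minor is at most `λ^{5n}`. -/
theorem minor_sq_le_of_perturbed_massager {n : ℕ}
    (A S M R : Matrix (Fin n) (Fin n) ℤ) (hA : A.det ≠ 0)
    (hS : IsSmithForm A S)
    (hMred : ∀ i j, 0 ≤ M i j ∧ M i j < 2 * S j j)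
    (lam : ℕ) (hlam_n : n ≤ lam) (hlam_det : ((2 : ℤ) • S).det ≤ (lam : ℤ) ^ n)
    (hR : ∀ i j, 0 ≤ R i j ∧ R i j ≤ (lam : ℤ) - 1) :
    ∀ (m : ℕ) (r c : Fin m → Fin n), Function.Injective r → Function.Injective c →
      (((M + (2 : ℤ) • (R * S)).submatrix r c).det) ^ 2 ≤ (lam : ℤ) ^ (5 * n) := by
  intro m r c _ hc
  have hM i j : |M i j| ≤ 2 * S j j := (abs_of_nonneg (hMred i j).1).trans_le (hMred i j).2.le
  have hR' i j : |R i j| ≤ (lam : ℤ) - 1 := (abs_of_nonneg (hR i j).1).trans_le (hR i j).2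
  simpa using minor_sq_le_of_perturbed_massager_general (fun i j => hS.1 i j) hS.2.1 hM
    (by simpa using hlam_n) (by simpa using hlam_det) hR' r hc
end
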